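/- Let Γ = ((V,E),(V₁,V₂)) be a game graph with target sets T₁,…,T_k ⊆ V and parameter h with 1 ≤ h ≤ |V|, let (ρ_ℓ)_{1≤ℓ≤k} be the associated progress measure (the least fixed point of the update operator), and let W = {v ∈ V | ρ_ℓ(v) < ∞ for some ℓ}. Then for every index ℓ and every vertex v ∈ T_ℓ with ρ_ℓ(v) = 0, player 1 has a strategy to reach the set {v' ∈ T_{ℓ⊕1} | ρ_{ℓ⊕1}(v') = 0} from v, against any strategy of player 2, such that the play visits only vertices of W until that set is reached. -/

import Mathlib

open Classical

universe u

/-- A game graph: a directed graph `E` on vertex set `V` together with the set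
`P1` of player-1 vertices; player-2 vertices are the complement of `P1`. -/
structure GameGraph (V : Type u) where
  E : V → V → Prop
  P1 : Set V

/-- The two players. -/
inductive Player : Type where
  | one : Player
  | two : Player

/-- The opponent of a player. -/
def Player.opp : Player → Player
  | .one => .two
  | .two => .one

/-- Select the first argument for player 1 and the second for player 2. -/
def Player.sel {α : Sort*} : Player → α → α → α
  | .one, a, _ => a
  | .two, _, b => b

variable {V : Type u}

/-- The vertices belonging to a player. -/
def GameGraph.verts (Γ : GameGraph V) : Player → Set V
  | .one => Γ.P1
  | .two => Γ.P1ᶜ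

/-- Every vertex has at least one outgoing edge. -/
def GameGraph.NoDead (Γ : GameGraph V) : Prop := ∀ v, ∃ w, Γ.E v w

/-- A (general, history-dependent) strategy: given the history of the play so far
(the vertices visited strictly before the current one) and the current vertex,
choose a next vertex. -/
abbrev Strat (V : Type u) : Type u := List V → V → V

/-- A strategy is memoryless if it depends only on the current vertex. -/
def Memoryless (σ : Strat V) : Prop := ∀ h h' v, σ h v = σ h' v

/-- A strategy is valid for player `p` if at every vertex of player `p` it
chooses a successor of that vertex. -/
def GameGraph.ValidFor (Γ : GameGraph V) (p : Player) (σ : Strat V) : Prop :=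
  ∀ hist v, v ∈ Γ.verts p → Γ.E v (σ hist v)

/-- One step of the play: the player-1 strategy moves at `P1`-vertices, the
player-2 strategy elsewhere. -/
noncomputable def GameGraph.step (Γ : GameGraph V) (σ π : Strat V)
    (hist : List V) (v : V) : V :=
  if v ∈ Γ.P1 then σ hist v else π hist v

/-- The play determined by a start vertex `v`, a player-1 strategy `σ` and a
player-2 strategy `π`, together with its history. -/
noncomputable def GameGraph.playAux (Γ : GameGraph V) (σ π : Strat V) (v : V) :
    ℕ → List V × V
  | 0 => ([], v)
  | n + 1 =>
      let q := Γ.playAux σ π v n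
      (q.1 ++ [q.2], Γ.step σ π q.1 q.2)

/-- The play determined by a start vertex `v`, a player-1 strategy `σ` and a
player-2 strategy `π`. -/
noncomputable def GameGraph.play (Γ : GameGraph V) (σ π : Strat V) (v : V)
    (n : ℕ) : V :=
  (Γ.playAux σ π v n).2

/-- The play from `v` where player `p` uses strategy `σ` and the opponent uses
strategy `τ`. -/
noncomputable def GameGraph.winPlay (Γ : GameGraph V) (p : Player)
    (σ τ : Strat V) (v : V) : ℕ → V :=
  Γ.play (p.sel σ τ) (p.sel τ σ) v

/-- Player `p` wins from `v` for objective `Ω`: player 1 wants the resulting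
play to lie in `Ω`, player 2 wants it to lie outside `Ω`. -/
def GameGraph.Wins (Γ : GameGraph V) (p : Player) (Ω : Set (ℕ → V)) (v : V) :
    Prop :=
  ∃ σ, Γ.ValidFor p σ ∧ ∀ τ, Γ.ValidFor p.opp τ →
    p.sel (Γ.winPlay p σ τ v ∈ Ω) (Γ.winPlay p σ τ v ∉ Ω)

/-- A player-`p` dominion for objective `Ω`: a nonempty set from each of whose
vertices player `p` has a winning strategy that moreover keeps the play inside
the set. -/
def GameGraph.Dominion (Γ : GameGraph V) (p : Player) (Ω : Set (ℕ → V))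
    (D : Set V) : Prop :=
  D.Nonempty ∧ ∀ v ∈ D, ∃ σ, Γ.ValidFor p σ ∧ ∀ τ, Γ.ValidFor p.opp τ →
    (p.sel (Γ.winPlay p σ τ v ∈ Ω) (Γ.winPlay p σ τ v ∉ Ω)) ∧
    ∀ n, Γ.winPlay p σ τ v n ∈ D

/-- The player-`p` attractor of `U`: the least set containing `U`, every
player-`p` vertex with some successor in it, and every opponent vertex all of
whose successors are in it. -/
inductive GameGraph.Attr (Γ : GameGraph V) (p : Player) (U : Set V) : V → Prop
  | base {v} : v ∈ U → GameGraph.Attr Γ p U v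
  | own {v w} : v ∈ Γ.verts p → Γ.E v w → GameGraph.Attr Γ p U w →
      GameGraph.Attr Γ p U v
  | opp {v} : v ∈ Γ.verts p.opp → (∀ w, Γ.E v w → GameGraph.Attr Γ p U w) →
      GameGraph.Attr Γ p U v

/-- The player-`p` attractor, as a set. -/
def GameGraph.attr (Γ : GameGraph V) (p : Player) (U : Set V) : Set V :=
  {v | Γ.Attr p U v}

/-- The iterative construction `R_j` of the player-`p` attractor. -/
def GameGraph.attrIter (Γ : GameGraph V) (p : Player) (U : Set V) : ℕ → Set V
  | 0 => U
  | n + 1 =>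
      Γ.attrIter p U n
        ∪ {v | v ∈ Γ.verts p ∧ ∃ w, Γ.E v w ∧ w ∈ Γ.attrIter p U n}
        ∪ {v | v ∈ Γ.verts p.opp ∧ ∀ w, Γ.E v w → w ∈ Γ.attrIter p U n}

/-- The `p`-rank of `v` with respect to `U`: the least `j` with `v ∈ R_j`, and
`∞` if there is no such `j`. -/
noncomputable def GameGraph.rank (Γ : GameGraph V) (p : Player) (U : Set V)
    (v : V) : ℕ∞ :=
  ⨅ n ∈ {n : ℕ | v ∈ Γ.attrIter p U n}, (n : ℕ∞)

/-- A set `U` is `p`-closed: every player-`p` vertex of `U` has all its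
successors in `U`, and every opponent vertex of `U` has some successor in `U`. -/
def GameGraph.PClosed (Γ : GameGraph V) (p : Player) (U : Set V) : Prop :=
  ∀ v ∈ U, (v ∈ Γ.verts p → ∀ w, Γ.E v w → w ∈ U) ∧
    (v ∈ Γ.verts p.opp → ∃ w, Γ.E v w ∧ w ∈ U)

/-- The induced game graph on a subset `U` of the vertices. -/
def GameGraph.sub (Γ : GameGraph V) (U : Set V) : GameGraph U where
  E a b := Γ.E (a : V) (b : V)
  P1 := {a : U | (a : V) ∈ Γ.P1}

/-- The game graph with the roles of the two players exchanged. -/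
def GameGraph.swap (Γ : GameGraph V) : GameGraph V where
  E := Γ.E
  P1 := Γ.P1ᶜ

/-- The set of vertices occurring infinitely often in a play. -/
def InfOcc (ω : ℕ → V) : Set V := {v | ∀ n, ∃ m, n ≤ m ∧ ω m = v}

/-- An objective is prefix-independent if membership of a play depends only on
the set of vertices visited infinitely often. -/
def PrefixIndep (Ω : Set (ℕ → V)) : Prop :=
  ∀ ω ω', InfOcc ω = InfOcc ω' → (ω ∈ Ω ↔ ω' ∈ Ω)

/-- The Büchi objective with target set `T`. -/
def BuchiObj (T : Set V) : Set (ℕ → V) := {ω | (InfOcc ω ∩ T).Nonempty}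

/-- The generalized Büchi objective with target sets `T i`. -/
def GenBuchiObj {ι : Sort*} (T : ι → Set V) : Set (ℕ → V) :=
  {ω | ∀ i, (InfOcc ω ∩ T i).Nonempty}

/-- The disjunctive co-Büchi objective with target sets `T i`. -/
def DisjCoBuchiObj {ι : Sort*} (T : ι → Set V) : Set (ℕ → V) :=
  {ω | ∃ i, InfOcc ω ∩ T i = ∅}

/-- The GR(1) objective with assumption sets `L t` and guarantee sets `U ℓ`. -/
def GR1Obj {ι₁ ι₂ : Sort*} (L : ι₁ → Set V) (U : ι₂ → Set V) : Set (ℕ → V) :=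
  {ω | (∀ t, (InfOcc ω ∩ L t).Nonempty) → ∀ ℓ, (InfOcc ω ∩ U ℓ).Nonempty}

/-- An objective on the full vertex set, restricted to plays of the induced
game graph on `U`. -/
def subObj (U : Set V) (Ω : Set (ℕ → V)) : Set (ℕ → ↥U) :=
  {ω | (fun n => (ω n : V)) ∈ Ω}

/-- The out-degree of a vertex. -/
noncomputable def GameGraph.outDeg (Γ : GameGraph V) (v : V) : ℕ :=
  {w | Γ.E v w}.ncard

/-- A hierarchical graph decomposition of a game graph `Γ`: for every vertex
`v`, `idx v` enumerates the incoming edges of `v` (i.e., their sources) by the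
positions `0, …, indeg(v) − 1`, listing edges from player-2 vertices first. -/
structure HierDecomp (Γ : GameGraph V) where
  idx : V → V → ℕ
  idx_inj : ∀ v u u', Γ.E u v → Γ.E u' v → idx v u = idx v u' → u = u'
  idx_lt : ∀ v u, Γ.E u v → idx v u < {u' | Γ.E u' v}.ncard
  p2_first : ∀ v u u', Γ.E u v → Γ.E u' v → u ∉ Γ.P1 → u' ∈ Γ.P1 →
      idx v u < idx v u'

/-- The `i`-th level `Γ_i = (G_i, (V₁,V₂))` of the hierarchical graph
decomposition: `G_i` keeps all outgoing edges of vertices of out-degree at most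
`2^i`, and the first `2^i` incoming edges of every vertex. -/
def HierDecomp.graph {Γ : GameGraph V} (H : HierDecomp Γ) (i : ℕ) :
    GameGraph V where
  E u v := Γ.E u v ∧ (Γ.outDeg u ≤ 2 ^ i ∨ H.idx v u < 2 ^ i)
  P1 := Γ.P1

/-- The exception set `Z_i`: player-2 vertices with no outgoing edge in `G_i`
together with player-1 vertices with more than `2^i` outgoing edges in `G`. -/
def HierDecomp.Z {Γ : GameGraph V} (H : HierDecomp Γ) (i : ℕ) : Set V :=
  {v | v ∉ Γ.P1 ∧ ¬ ∃ w, (H.graph i).E v w} ∪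
    {v | v ∈ Γ.P1 ∧ 2 ^ i < Γ.outDeg v}

/-- Cyclic successor `ℓ ⊕ 1` on `Fin k`. -/
def finSucc {k : ℕ} (ℓ : Fin k) : Fin k :=
  ⟨(ℓ.val + 1) % k, Nat.mod_lt _ (Nat.lt_of_le_of_lt (Nat.zero_le _) ℓ.isLt)⟩

/-- The bound `n̄ = min (h − 1) |V ∖ T|` of the progress measure. -/
noncomputable def nbar (h : ℕ) (T : Set V) : ℕ := min (h - 1) Tᶜ.ncard

/-- The value of the best successor of `v` for the player owning `v`. -/
noncomputable def GameGraph.best (Γ : GameGraph V) {k : ℕ} (T : Fin k → Set V)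
    (ρ : Fin k → V → ℕ∞) (ℓ : Fin k) (v : V) : ℕ∞ :=
  let ℓ' := if v ∈ T ℓ then finSucc ℓ else ℓ
  if v ∈ Γ.P1 then ⨅ w ∈ {w | Γ.E v w}, ρ ℓ' w
  else ⨆ w ∈ {w | Γ.E v w}, ρ ℓ' w

/-- The increment operation `incr` of the progress measure (for the pair
`(v, ℓ)`). -/
noncomputable def pmIncr (h : ℕ) {k : ℕ} (T : Fin k → Set V) (ℓ : Fin k)
    (v : V) (x : ℕ∞) : ℕ∞ :=
  if v ∈ T ℓ ∧ x ≠ ⊤ then 0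
  else if x < (nbar h (T ℓ) : ℕ∞) then x + 1 else ⊤

/-- The update operator of the progress measure: update `ρ ℓ v` to
`max (ρ ℓ v) (incr (best v))`. -/
noncomputable def GameGraph.pmStep (Γ : GameGraph V) (h : ℕ) {k : ℕ}
    (T : Fin k → Set V) (ρ : Fin k → V → ℕ∞) : Fin k → V → ℕ∞ :=
  fun ℓ v => max (ρ ℓ v) (pmIncr h T ℓ v (Γ.best T ρ ℓ v))

/-- `ρ` is the progress measure associated with `Γ`, `T` and `h`: the least
fixed point (starting from the all-zero functions, i.e., the least one) of the
update operator. -/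
def GameGraph.IsProgressMeasure (Γ : GameGraph V) (h : ℕ) {k : ℕ}
    (T : Fin k → Set V) (ρ : Fin k → V → ℕ∞) : Prop :=
  Γ.pmStep h T ρ = ρ ∧ ∀ ρ', Γ.pmStep h T ρ' = ρ' → ∀ ℓ v, ρ ℓ v ≤ ρ' ℓ v

/-- Player `p` can force, from `v`, that the play stays in `D` forever and
visits every target set `T i` infinitely often. -/
def GameGraph.ForcesStayBuchi (Γ : GameGraph V) (p : Player) (D : Set V)
    {ι : Sort*} (T : ι → Set V) (v : V) : Prop :=
  ∃ σ, Γ.ValidFor p σ ∧ ∀ τ, Γ.ValidFor p.opp τ →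
    (∀ n, Γ.winPlay p σ τ v n ∈ D) ∧
    ∀ i n, ∃ m, n ≤ m ∧ Γ.winPlay p σ τ v m ∈ T i

theorem pmIncr_top (h : ℕ) {k : ℕ} (T : Fin k → Set V) (ℓ : Fin k) (v : V) :
    pmIncr h T ℓ v ⊤ = ⊤ := by
  simp [pmIncr]

theorem best_mono (Γ : GameGraph V) {k : ℕ} (T : Fin k → Set V)
    (ρ' ρ : Fin k → V → ℕ∞) (hle : ∀ ℓ v, ρ' ℓ v ≤ ρ ℓ v) (ℓ : Fin k) (v : V) :
    Γ.best T ρ' ℓ v ≤ Γ.best T ρ ℓ v := by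
  unfold GameGraph.best
  dsimp only
  split_ifs
  all_goals first
    | exact iInf₂_mono fun w _ => hle _ w
    | exact iSup₂_mono fun w _ => hle _ w

theorem pmIncr_mono (h : ℕ) {k : ℕ} (T : Fin k → Set V) (ℓ : Fin k) (v : V)
    {x y : ℕ∞} (hxy : x ≤ y) : pmIncr h T ℓ v x ≤ pmIncr h T ℓ v y := by
  by_cases hy : y = ⊤
  · subst hy
    rw [pmIncr_top]
    exact le_top
  have hx : x ≠ ⊤ := ne_top_of_le_ne_top hy hxy
  unfold pmIncr
  by_cases hv : v ∈ T ℓ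
  · simp [hv, hx, hy]
  · simp only [hv, false_and, if_false]
    by_cases h2 : y < (nbar h (T ℓ) : ℕ∞)
    · rw [if_pos h2, if_pos (lt_of_le_of_lt hxy h2)]
      gcongr
    · rw [if_neg h2]
      exact le_top

theorem pm_incr_le (Γ : GameGraph V) (h : ℕ) {k : ℕ} (T : Fin k → Set V)
    (ρ : Fin k → V → ℕ∞) (hρ : Γ.IsProgressMeasure h T ρ) (ℓ : Fin k) (v : V) :
    pmIncr h T ℓ v (Γ.best T ρ ℓ v) ≤ ρ ℓ v := by
  have := congrFun (congrFun hρ.1 ℓ) v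
  unfold GameGraph.pmStep at this
  exact max_eq_left_iff.mp this

theorem pm_best_ne_top (Γ : GameGraph V) (h : ℕ) {k : ℕ} (T : Fin k → Set V)
    (ρ : Fin k → V → ℕ∞) (hρ : Γ.IsProgressMeasure h T ρ) (ℓ : Fin k) (v : V)
    (hv : ρ ℓ v ≠ ⊤) : Γ.best T ρ ℓ v ≠ ⊤ := by
  intro hb
  have := pm_incr_le Γ h T ρ hρ ℓ v
  rw [hb, pmIncr_top] at this
  exact hv (top_le_iff.mp this)

theorem pm_target_zero (Γ : GameGraph V) (h : ℕ) {k : ℕ} (T : Fin k → Set V)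
    (ρ : Fin k → V → ℕ∞) (hρ : Γ.IsProgressMeasure h T ρ) (ℓ : Fin k) (v : V)
    (hvT : v ∈ T ℓ) (hv : ρ ℓ v ≠ ⊤) : ρ ℓ v = 0 := by
  let ρ' : Fin k → V → ℕ∞ := fun ℓ v => if v ∈ T ℓ ∧ ρ ℓ v ≠ ⊤ then 0 else ρ ℓ v
  have hle : ∀ ℓ v, ρ' ℓ v ≤ ρ ℓ v := by
    intro ℓ v
    simp only [ρ']
    split_ifs
    · exact zero_le
    · exact le_rfl
  have hfix : Γ.pmStep h T ρ' = ρ' := by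
    funext ℓ v
    unfold GameGraph.pmStep
    apply max_eq_left
    have hb := best_mono Γ T ρ' ρ hle ℓ v
    by_cases hc : v ∈ T ℓ ∧ ρ ℓ v ≠ ⊤
    · have h1 := pm_best_ne_top Γ h T ρ hρ ℓ v hc.2
      have h2 := ne_top_of_le_ne_top h1 hb
      simp [pmIncr, hc.1, h2]
    · have h1 : ρ' ℓ v = ρ ℓ v := if_neg hc
      rw [h1]
      exact (pmIncr_mono h T ℓ v hb).trans (pm_incr_le Γ h T ρ hρ ℓ v)
  have := hρ.2 ρ' hfix ℓ v
  have h1 : ρ' ℓ v = 0 := if_pos ⟨hvT, hv⟩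
  rw [h1] at this
  exact le_antisymm this zero_le

theorem pm_best_lt (Γ : GameGraph V) (h : ℕ) {k : ℕ} (T : Fin k → Set V)
    (ρ : Fin k → V → ℕ∞) (hρ : Γ.IsProgressMeasure h T ρ) (ℓ : Fin k) (v : V)
    (hvT : v ∉ T ℓ) (hv : ρ ℓ v ≠ ⊤) : Γ.best T ρ ℓ v + 1 ≤ ρ ℓ v := by
  have h1 := pm_incr_le Γ h T ρ hρ ℓ v
  unfold pmIncr at h1
  simp only [hvT, false_and, if_false] at h1
  split_ifs at h1
  · exact h1
  · exact absurd (top_le_iff.mp h1) hv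

theorem exists_argmin (Γ : GameGraph V) (hΓ : Γ.NoDead) (f : V → ℕ∞) (v : V) :
    ∃ w, Γ.E v w ∧ ∀ w', Γ.E v w' → f w ≤ f w' := by
  obtain ⟨w, hw, hmin⟩ := (InvImage.wf f (wellFounded_lt (α := ℕ∞))).has_min
    {w | Γ.E v w} (hΓ v)
  exact ⟨w, hw, fun w' hw' => not_lt.mp (hmin w' hw')⟩

/-- for the progress measure `ρ`, if `v ∈ T ℓ` and `ρ ℓ v = 0`,
then player 1 has a strategy to reach `{v' ∈ T (ℓ⊕1) | ρ (ℓ⊕1) v' = 0}` from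
`v` against any player-2 strategy, visiting only vertices of
`W = {u | ∃ ℓ', ρ ℓ' u < ∞}` until that set is reached. -/
theorem progress_measure_reach_next_target {V : Type u} [Finite V]
    (Γ : GameGraph V) (hΓ : Γ.NoDead) {k : ℕ} (T : Fin k → Set V)
    (h : ℕ) (hh1 : 1 ≤ h) (hh2 : h ≤ Nat.card V)
    (ρ : Fin k → V → ℕ∞) (hρ : Γ.IsProgressMeasure h T ρ)
    (ℓ : Fin k) (v : V) (hvT : v ∈ T ℓ) (h0 : ρ ℓ v = 0) :
    ∃ σ, Γ.ValidFor Player.one σ ∧ ∀ τ, Γ.ValidFor Player.two τ →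
      ∃ n, Γ.play σ τ v n ∈
          {v' | v' ∈ T (finSucc ℓ) ∧ ρ (finSucc ℓ) v' = 0} ∧
        ∀ m ≤ n, Γ.play σ τ v m ∈ {u | ∃ ℓ' : Fin k, ρ ℓ' u ≠ ⊤} := by
  choose g hgE hgmin using exists_argmin Γ hΓ (ρ (finSucc ℓ))
  refine ⟨fun _ u => g u, fun _ u _ => hgE u, fun τ hτ => ?_⟩
  set p := Γ.play (fun _ u => g u) τ v with hp
  have hstep : ∀ n, ∀ j : Fin k,
      (if p n ∈ T j then finSucc j else j) = finSucc ℓ →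
      ρ (finSucc ℓ) (p (n + 1)) ≤ Γ.best T ρ j (p n) := by
    intro n j hj
    have hpn : p (n + 1) = Γ.step (fun _ u => g u) τ
        (Γ.playAux (fun _ u => g u) τ v n).1 (p n) := rfl
    unfold GameGraph.best
    dsimp only
    rw [hj, hpn]
    unfold GameGraph.step
    split_ifs with h1
    · exact le_iInf₂ fun w hw => hgmin _ w hw
    · exact le_iSup₂_of_le (f := fun w (_ : w ∈ {w | Γ.E (p n) w}) => ρ (finSucc ℓ) w)
        _ (hτ _ _ h1) le_rfl
  have main : ∀ N : ℕ, ∀ n, ρ (finSucc ℓ) (p n) ≤ N →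
      ∃ m, n ≤ m ∧ (p m ∈ T (finSucc ℓ) ∧ ρ (finSucc ℓ) (p m) = 0) ∧
        ∀ i, n ≤ i → i ≤ m → ρ (finSucc ℓ) (p i) ≠ ⊤ := by
    intro N
    induction N with
    | zero =>
      intro n hn
      have hnt : ρ (finSucc ℓ) (p n) ≠ ⊤ := ne_top_of_le_ne_top (ENat.coe_ne_top _) hn
      by_cases hT : p n ∈ T (finSucc ℓ)
      · refine ⟨n, le_rfl, ⟨hT, pm_target_zero Γ h T ρ hρ _ _ hT hnt⟩, fun i h1 h2 => ?_⟩
        rw [le_antisymm h2 h1]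
        exact hnt
      · have h1 := (pm_best_lt Γ h T ρ hρ _ _ hT hnt).trans hn
        simp at h1
    | succ N ih =>
      intro n hn
      have hnt : ρ (finSucc ℓ) (p n) ≠ ⊤ := ne_top_of_le_ne_top (ENat.coe_ne_top _) hn
      by_cases hT : p n ∈ T (finSucc ℓ)
      · refine ⟨n, le_rfl, ⟨hT, pm_target_zero Γ h T ρ hρ _ _ hT hnt⟩, fun i h1 h2 => ?_⟩
        rw [le_antisymm h2 h1]
        exact hnt
      · have h1 := (pm_best_lt Γ h T ρ hρ _ _ hT hnt).trans hn
        push_cast at h1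
        have h2 := (ENat.add_le_add_iff_right (ENat.one_ne_top)).mp h1
        obtain ⟨m, hm, hmt, hall⟩ := ih (n + 1)
          ((hstep n (finSucc ℓ) (if_neg hT)).trans h2)
        refine ⟨m, by omega, hmt, fun i hi1 hi2 => ?_⟩
        rcases Nat.eq_or_lt_of_le hi1 with rfl | hlt
        · exact hnt
        · exact hall i hlt hi2
  have hv : ρ ℓ v ≠ ⊤ := by simp [h0]
  have hb := pm_best_ne_top Γ h T ρ hρ ℓ v hv
  have h1 : ρ (finSucc ℓ) (p 1) ≠ ⊤ :=
    ne_top_of_le_ne_top hb (hstep 0 ℓ (if_pos hvT))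
  obtain ⟨N, hN⟩ := ENat.ne_top_iff_exists.mp h1
  obtain ⟨m, _, hmt, hall⟩ := main N 1 hN.symm.le
  refine ⟨m, hmt, fun i hi => ?_⟩
  rcases Nat.eq_zero_or_pos i with rfl | hpos
  · exact ⟨ℓ, hv⟩
  · exact ⟨finSucc ℓ, hall i hpos hi⟩
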